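/- For every GLM-CGL state, the x-direction entropy-potential identity V · f_x + Φ B_x − q_x = 𝓕_x holds, where q_x = v_x 𝓔 = −ρ s v_x, Φ = 2ρ(v·B)/p⊥, and 𝓕_x = 2ρv_x + β⊥ v_x |B|² + 2 c_h β⊥ Ψ B_x. -/

import Mathlib

/-!
The flux is the sum of a gas part, a magnetic part and a divergence-cleaning part, and the identity
holds for each part separately: the gas part pairs with `V` to the entropy flux plus `2ρ v·n`, the
magnetic part to `β⊥ (v·n)|B|²` minus the contribution `Φ (B·n)` of the Godunov term, and the
cleaning part to `2 c_h β⊥ Ψ (B·n)`. Only dot products occur, so the direction `n` and the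
dimension are arbitrary.
-/

section

/-- A GLM-CGL state with primitive variables `(ρ, v, p∥, p⊥, B, Ψ)` and vectors indexed by `ι`. -/
structure CGLState (K ι : Type*) where
  ρ : K
  v : ι → K
  pPar : K
  pPerp : K
  B : ι → K
  Ψ : K

/-- A vector with one slot per conservative variable `(ρ, ρv, p∥, E, B, Ψ)`; both entropy variables
and fluxes are of this kind. -/
@[ext]
structure CGLVector (K ι : Type*) where
  density : K
  momentum : ι → K
  parallelPressure : K
  energy : K
  magnetic : ι → K
  cleaning : K

namespace CGLVector

variable {K ι : Type*}

@[simps]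
instance [Add K] : Add (CGLVector K ι) where
  add a b :=
    { density := a.density + b.density
      momentum := a.momentum + b.momentum
      parallelPressure := a.parallelPressure + b.parallelPressure
      energy := a.energy + b.energy
      magnetic := a.magnetic + b.magnetic
      cleaning := a.cleaning + b.cleaning }

variable [NonUnitalNonAssocSemiring K] [Fintype ι]

/-- The Euclidean pairing `V · f`, summed over all conservative variables. -/
def pairing (a b : CGLVector K ι) : K :=
  a.density * b.density + a.momentum ⬝ᵥ b.momentum + a.parallelPressure * b.parallelPressure
    + a.energy * b.energy + a.magnetic ⬝ᵥ b.magnetic + a.cleaning * b.cleaning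

lemma pairing_add (a b c : CGLVector K ι) :
    a.pairing (b + c) = a.pairing b + a.pairing c := by
  have momentum_add : (b + c).momentum = b.momentum + c.momentum := rfl
  have magnetic_add : (b + c).magnetic = b.magnetic + c.magnetic := rfl
  simp only [pairing, add_density, momentum_add, add_parallelPressure, add_energy, magnetic_add,
    add_cleaning, dotProduct_add, mul_add]
  abel

end CGLVector

variable {K ι : Type*} [Field K]

namespace CGLState

variable (U : CGLState K ι)

/-- The inverse temperature `β⊥ = ρ / p⊥`. -/
def betaPerp : K := U.ρ / U.pPerp

/-- The inverse temperature `β∥ = ρ / p∥`. -/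
def betaPar : K := U.ρ / U.pPar

variable [Fintype ι] (s ch : K) (n : ι → K)

/-- The total energy density `e = ½(ρ|v|² + |B|² + 3p)`, written with `3p = 2p⊥ + p∥`. -/
def totalEnergy : K :=
  (U.ρ * (U.v ⬝ᵥ U.v) + U.B ⬝ᵥ U.B + (2 * U.pPerp + U.pPar)) / 2

/-- The entropy variable `V`. The specific entropy `s = ln (p∥ p⊥² / ρ⁵)` enters as a scalar, since
its dependence on the state plays no part in the pairing with a flux. -/
def entropyVariable : CGLVector K ι where
  density := 5 - s - U.betaPerp * (U.v ⬝ᵥ U.v)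
  momentum := (2 * U.betaPerp) • U.v
  parallelPressure := U.betaPerp - U.betaPar
  energy := -(2 * U.betaPerp)
  magnetic := (2 * U.betaPerp) • U.B
  cleaning := 2 * U.betaPerp * U.Ψ

/-- The coefficient `Φ = 2ρ(v·B)/p⊥` of the Godunov term. -/
def godunovPotential : K := 2 * U.ρ * (U.v ⬝ᵥ U.B) / U.pPerp

/-- The flux in direction `n`; the paper's `f_x` is the case where `n` is the first unit vector. -/
def flux : CGLVector K ι where
  density := U.ρ * (U.v ⬝ᵥ n)
  momentum := (U.ρ * (U.v ⬝ᵥ n)) • U.v + (U.pPerp + U.B ⬝ᵥ U.B / 2) • n - (U.B ⬝ᵥ n) • U.B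
  parallelPressure := U.pPar * (U.v ⬝ᵥ n)
  energy := (U.v ⬝ᵥ n) * (U.totalEnergy + U.pPerp + U.B ⬝ᵥ U.B / 2)
    - (U.B ⬝ᵥ n) * (U.v ⬝ᵥ U.B) + ch * U.Ψ * (U.B ⬝ᵥ n)
  magnetic := (U.v ⬝ᵥ n) • U.B - (U.B ⬝ᵥ n) • U.v + (ch * U.Ψ) • n
  cleaning := ch * (U.B ⬝ᵥ n)

/-- The part of the flux that remains when `B = 0` and `Ψ = 0`. -/
def gasFlux : CGLVector K ι where
  density := U.ρ * (U.v ⬝ᵥ n)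
  momentum := (U.ρ * (U.v ⬝ᵥ n)) • U.v + U.pPerp • n
  parallelPressure := U.pPar * (U.v ⬝ᵥ n)
  energy := (U.v ⬝ᵥ n) * ((U.ρ * (U.v ⬝ᵥ U.v) + (2 * U.pPerp + U.pPar)) / 2 + U.pPerp)
  magnetic := 0
  cleaning := 0

/-- The part of the flux quadratic in `B`, together with the ideal induction flux. -/
def magneticFlux : CGLVector K ι where
  density := 0
  momentum := (U.B ⬝ᵥ U.B / 2) • n - (U.B ⬝ᵥ n) • U.B
  parallelPressure := 0
  energy := (U.v ⬝ᵥ n) * (U.B ⬝ᵥ U.B) - (U.B ⬝ᵥ n) * (U.v ⬝ᵥ U.B)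
  magnetic := (U.v ⬝ᵥ n) • U.B - (U.B ⬝ᵥ n) • U.v
  cleaning := 0

/-- The divergence-cleaning part of the flux, which is the part proportional to `c_h`. -/
def cleaningFlux : CGLVector K ι where
  density := 0
  momentum := 0
  parallelPressure := 0
  energy := ch * U.Ψ * (U.B ⬝ᵥ n)
  magnetic := (ch * U.Ψ) • n
  cleaning := ch * (U.B ⬝ᵥ n)

lemma flux_eq_gasFlux_add_magneticFlux_add_cleaningFlux [NeZero (2 : K)] :
    U.flux ch n = U.gasFlux n + U.magneticFlux n + U.cleaningFlux ch n := by
  ext i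
  case momentum =>
    simp only [flux, gasFlux, magneticFlux, cleaningFlux, CGLVector.add_momentum, Pi.add_apply,
      Pi.sub_apply, Pi.smul_apply, Pi.zero_apply, smul_eq_mul]
    ring
  case energy =>
    simp only [flux, gasFlux, magneticFlux, cleaningFlux, totalEnergy, CGLVector.add_energy]
    field_simp
    ring
  all_goals simp [flux, gasFlux, magneticFlux, cleaningFlux]

lemma entropyVariable_pairing_gasFlux [NeZero (2 : K)] (hpar : U.pPar ≠ 0) (hperp : U.pPerp ≠ 0) :
    (U.entropyVariable s).pairing (U.gasFlux n)
      = (U.v ⬝ᵥ n) * (-U.ρ * s) + 2 * U.ρ * (U.v ⬝ᵥ n) := by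
  have hβperp : U.betaPerp * U.pPerp = U.ρ := div_mul_cancel₀ _ hperp
  have hβpar : U.betaPar * U.pPar = U.ρ := div_mul_cancel₀ _ hpar
  simp only [CGLVector.pairing, entropyVariable, gasFlux, dotProduct_add, dotProduct_smul,
    smul_dotProduct, dotProduct_zero, smul_eq_mul]
  field_simp
  linear_combination (-2 * (U.v ⬝ᵥ n)) * hβperp - (U.v ⬝ᵥ n) * hβpar

lemma entropyVariable_pairing_magneticFlux [NeZero (2 : K)] :
    (U.entropyVariable s).pairing (U.magneticFlux n)
      = U.betaPerp * (U.v ⬝ᵥ n) * (U.B ⬝ᵥ U.B) - U.godunovPotential * (U.B ⬝ᵥ n) := by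
  simp only [CGLVector.pairing, entropyVariable, magneticFlux, godunovPotential, betaPerp,
    dotProduct_sub, dotProduct_smul, smul_dotProduct, smul_eq_mul, dotProduct_comm U.B U.v]
  field_simp
  ring

lemma entropyVariable_pairing_cleaningFlux :
    (U.entropyVariable s).pairing (U.cleaningFlux ch n)
      = 2 * ch * U.betaPerp * U.Ψ * (U.B ⬝ᵥ n) := by
  simp only [CGLVector.pairing, entropyVariable, cleaningFlux, dotProduct_zero, dotProduct_smul,
    smul_dotProduct, smul_eq_mul]
  ring

end CGLState

theorem glm_cgl_entropy_potential_x_general [Fintype ι] [NeZero (2 : K)] (U : CGLState K ι)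
    (s ch : K) (n : ι → K) (hpar : U.pPar ≠ 0) (hperp : U.pPerp ≠ 0) :
    (U.entropyVariable s).pairing (U.flux ch n) + U.godunovPotential * (U.B ⬝ᵥ n)
        - (U.v ⬝ᵥ n) * (-U.ρ * s)
      = 2 * U.ρ * (U.v ⬝ᵥ n) + U.betaPerp * (U.v ⬝ᵥ n) * (U.B ⬝ᵥ U.B)
          + 2 * ch * U.betaPerp * U.Ψ * (U.B ⬝ᵥ n) := by
  rw [U.flux_eq_gasFlux_add_magneticFlux_add_cleaningFlux, CGLVector.pairing_add,
    CGLVector.pairing_add, U.entropyVariable_pairing_gasFlux s n hpar hperp,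
    U.entropyVariable_pairing_magneticFlux, U.entropyVariable_pairing_cleaningFlux]
  ring

end

/-- the x-direction entropy-potential identity
`V · f_x + Φ B_x − q_x = 𝓕_x` for every GLM-CGL state. -/
theorem glm_cgl_entropy_potential_x
    (ch : ℝ) (ρ vx vy vz pl pp Bx By Bz Ψ : ℝ)
    (hρ : 0 < ρ) (hpl : 0 < pl) (hpp : 0 < pp)
    (e : ℝ)
    (he : e = (ρ * (vx ^ 2 + vy ^ 2 + vz ^ 2) + (Bx ^ 2 + By ^ 2 + Bz ^ 2)
        + 3 * ((2 * pp + pl) / 3)) / 2) :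
    (∑ k : Fin 10,
      (![5 - Real.log (pl * pp ^ 2 / ρ ^ 5) - (ρ / pp) * (vx ^ 2 + vy ^ 2 + vz ^ 2),
          2 * (ρ / pp) * vx, 2 * (ρ / pp) * vy, 2 * (ρ / pp) * vz,
          (ρ / pp) - (ρ / pl), -(2 * (ρ / pp)),
          2 * (ρ / pp) * Bx, 2 * (ρ / pp) * By, 2 * (ρ / pp) * Bz,
          2 * (ρ / pp) * Ψ] k)
        * (![ρ * vx,
            ρ * vx ^ 2 + pp + (Bx ^ 2 + By ^ 2 + Bz ^ 2) / 2 - Bx ^ 2,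
            ρ * vx * vy - Bx * By,
            ρ * vx * vz - Bx * Bz,
            pl * vx,
            vx * (e + pp + (Bx ^ 2 + By ^ 2 + Bz ^ 2) / 2)
              - Bx * (vx * Bx + vy * By + vz * Bz) + ch * Ψ * Bx,
            ch * Ψ,
            vx * By - vy * Bx,
            vx * Bz - vz * Bx,
            ch * Bx] k))
      + (2 * ρ * (vx * Bx + vy * By + vz * Bz) / pp) * Bx
      - vx * (-ρ * Real.log (pl * pp ^ 2 / ρ ^ 5))
      = 2 * ρ * vx + (ρ / pp) * vx * (Bx ^ 2 + By ^ 2 + Bz ^ 2)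
          + 2 * ch * (ρ / pp) * Ψ * Bx := by
  have h := glm_cgl_entropy_potential_x_general
    ⟨ρ, ![vx, vy, vz], pl, pp, ![Bx, By, Bz], Ψ⟩ (Real.log (pl * pp ^ 2 / ρ ^ 5)) ch ![1, 0, 0]
    hpl.ne' hpp.ne'
  simp only [CGLVector.pairing, CGLState.entropyVariable, CGLState.flux, CGLState.totalEnergy,
    CGLState.godunovPotential, CGLState.betaPerp, CGLState.betaPar, Matrix.dotProduct_cons,
    Matrix.head_cons, Matrix.tail_cons, Matrix.dotProduct_of_isEmpty, Matrix.smul_cons,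
    Matrix.smul_empty, Matrix.add_cons, Matrix.empty_add_empty, Matrix.sub_cons,
    smul_eq_mul] at h
  simp only [he, Fin.sum_univ_succ, Matrix.cons_val_zero, Matrix.cons_val_succ,
    Finset.univ_unique, Fin.default_eq_zero, Matrix.cons_val_fin_one, Finset.sum_const,
    Finset.card_singleton, one_smul]
  linear_combination h
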